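/- arXiv:2107.07277 — 3 statements merged into one kernel-verified Lean document; each statement's English description precedes it below -/
import Mathlib

section
/- Suppose there exist matrices E, H ∈ ℝ^{n×n} with E ≻ 0 and H ≻ 0, S ∈ ℝ^{m×m} and G ∈ ℝ^{m×n} such that M(E,S,G,H) ⪰ 0. Then, setting P = E⁻¹, K = G E⁻¹, Γ = H⁻¹ and D = S, the quadratic dissipation (strict passivity) inequality holds: for all x ∈ ℝⁿ and v ∈ ℝ^m, ((A+BK)x+Fv)ᵀP((A+BK)x+Fv) − xᵀPx ≤ vᵀ(Cx+Dv) − xᵀΓx. (Paper's Lemma 1.) -/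
open Matrix

/-- The 4×4 block matrix M(E,S,G,H) from the paper's Lemma 1. -/
noncomputable def Mblock {n m : ℕ} (A : Matrix (Fin n) (Fin n) ℝ) (B F : Matrix (Fin n) (Fin m) ℝ)
    (C : Matrix (Fin m) (Fin n) ℝ)
    (E : Matrix (Fin n) (Fin n) ℝ) (S : Matrix (Fin m) (Fin m) ℝ)
    (G : Matrix (Fin m) (Fin n) ℝ) (H : Matrix (Fin n) (Fin n) ℝ) :
    Matrix ((Fin n ⊕ Fin m) ⊕ (Fin n ⊕ Fin n)) ((Fin n ⊕ Fin m) ⊕ (Fin n ⊕ Fin n)) ℝ :=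
  Matrix.fromBlocks
    (Matrix.fromBlocks E ((1 / 2 : ℝ) • (E * Cᵀ)) ((1 / 2 : ℝ) • (C * E))
      ((1 / 2 : ℝ) • (S + Sᵀ)))
    (Matrix.fromBlocks (A * E + B * G)ᵀ E Fᵀ 0)
    (Matrix.fromBlocks (A * E + B * G) F E 0)
    (Matrix.fromBlocks E 0 0 H)

/-!
Since the lower right block `diag(E, H)` is positive definite, `M(E, S, G, H) ⪰ 0` says that its
Schur complement is positive semidefinite. At the vector `(y, v)` this reads
`wᵀ E⁻¹ w + (E y)ᵀ H⁻¹ (E y) ≤ yᵀ E y + vᵀ (C E y + S v)` with `w = (A E + B G) y + F v`, and the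
substitution `x = E y`, a bijection because `E` is invertible, turns it into the dissipation
inequality. Every step is an equivalence.
-/

section SchurComplement

variable {ι κ R : Type*} [CommRing R] [PartialOrder R] [StarRing R]

theorem posDef_fromBlocks_zero_zero [Finite ι] [Finite κ] [AddLeftMono R] {A : Matrix ι ι R}
    {D : Matrix κ κ R} (hA : A.PosDef) (hD : D.PosDef) : (fromBlocks A 0 0 D).PosDef := by
  have := Fintype.ofFinite ι
  have := Fintype.ofFinite κ
  have hherm : (fromBlocks A 0 0 D).IsHermitian :=
    hA.isHermitian.fromBlocks conjTranspose_zero hD.isHermitian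
  refine .of_dotProduct_mulVec_pos hherm fun z hz ↦ ?_
  obtain ⟨x, y, rfl⟩ : ∃ x y, z = Sum.elim x y := ⟨_, _, (Sum.elim_comp_inl_inr z).symm⟩
  have hsplit : star (Sum.elim x y) ⬝ᵥ (fromBlocks A 0 0 D *ᵥ Sum.elim x y) =
      star x ⬝ᵥ (A *ᵥ x) + star y ⬝ᵥ (D *ᵥ y) := by
    simp [fromBlocks_mulVec, Function.star_sumElim]
  rw [hsplit]
  by_cases hx : x = 0
  · have hy : y ≠ 0 := fun hy ↦ hz (by rw [hx, hy, Sum.elim_zero_zero])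
    exact add_pos_of_nonneg_of_pos (hA.posSemidef.dotProduct_mulVec_nonneg x)
      (hD.dotProduct_mulVec_pos hy)
  · exact add_pos_of_pos_of_nonneg (hA.dotProduct_mulVec_pos hx)
      (hD.posSemidef.dotProduct_mulVec_nonneg y)

theorem posSemidef_fromBlocks_iff_forall_le [StarOrderedRing R] [Fintype ι] [Fintype κ]
    [DecidableEq κ] {A : Matrix ι ι R} {B : Matrix κ ι R} {D : Matrix κ κ R}
    (hA : A.IsHermitian) (hD : D.PosDef) (hD' : IsUnit D) :
    (fromBlocks A Bᴴ B D).PosSemidef ↔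
      ∀ z, star (B *ᵥ z) ⬝ᵥ (D⁻¹ *ᵥ (B *ᵥ z)) ≤ star z ⬝ᵥ (A *ᵥ z) := by
  have := hD'.invertible
  have hherm : (A - Bᴴ * D⁻¹ * B).IsHermitian :=
    hA.sub (isHermitian_conjTranspose_mul_mul B hD.isHermitian.inv)
  have hschur := hD.fromBlocks₂₂ A Bᴴ
  rw [conjTranspose_conjTranspose] at hschur
  rw [hschur, posSemidef_iff_dotProduct_mulVec, and_iff_right hherm]
  refine forall_congr' fun z ↦ ?_
  rw [sub_mulVec, dotProduct_sub, sub_nonneg, star_mulVec, ← dotProduct_mulVec, mulVec_mulVec,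
    mulVec_mulVec, Matrix.mul_assoc]

end SchurComplement

section Passivity

variable {ι κ ρ : Type*} [Fintype ι]

/-- The quadratic dissipation (strict passivity) inequality for the closed-loop system
`x⁺ = Φ x + F v` with virtual output `z = C x + D v`, for the storage function `xᵀ P x` and the
dissipation rate `xᵀ Γ x`. -/
def IsDissipative [Fintype κ] (Φ : Matrix ι ι ℝ) (F : Matrix ι κ ℝ) (C : Matrix κ ι ℝ)
    (D : Matrix κ κ ℝ) (P Γ : Matrix ι ι ℝ) : Prop :=
  ∀ (x : ι → ℝ) (v : κ → ℝ),
    (Φ *ᵥ x + F *ᵥ v) ⬝ᵥ (P *ᵥ (Φ *ᵥ x + F *ᵥ v)) - x ⬝ᵥ (P *ᵥ x) ≤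
      v ⬝ᵥ (C *ᵥ x + D *ᵥ v) - x ⬝ᵥ (Γ *ᵥ x)

/-- The upper left 2×2 corner of `M(E, S, G, H)`: the symmetric matrix of the quadratic form
`(y, v) ↦ yᵀ E y + vᵀ (C E y + S v)`, storage plus supply at the state `x = E y`. -/
noncomputable def supplyMatrix (C : Matrix κ ι ℝ) (E : Matrix ι ι ℝ) (S : Matrix κ κ ℝ) :
    Matrix (ι ⊕ κ) (ι ⊕ κ) ℝ :=
  fromBlocks E ((1 / 2 : ℝ) • (E * Cᵀ)) ((1 / 2 : ℝ) • (C * E)) ((1 / 2 : ℝ) • (S + Sᵀ))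

/-- The matrix `M(E, S, G, H)` over arbitrary finite index types, with `N` standing for the block
`A E + B G`. -/
noncomputable def passivityLMI (N : Matrix ι ι ℝ) (F : Matrix ι κ ℝ) (C : Matrix κ ι ℝ)
    (E : Matrix ι ι ℝ) (S : Matrix κ κ ℝ) (H : Matrix ι ι ℝ) :
    Matrix ((ι ⊕ κ) ⊕ (ι ⊕ ι)) ((ι ⊕ κ) ⊕ (ι ⊕ ι)) ℝ :=
  fromBlocks (supplyMatrix C E S) (fromBlocks Nᵀ E Fᵀ 0) (fromBlocks N F E 0) (fromBlocks E 0 0 H)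

theorem isHermitian_supplyMatrix (C : Matrix κ ι ℝ) {E : Matrix ι ι ℝ} (S : Matrix κ κ ℝ)
    (hE : E.IsHermitian) : (supplyMatrix C E S).IsHermitian := by
  have hEt : Eᵀ = E := by simpa using hE.eq
  refine hE.fromBlocks ?_ ?_
  · simp [hEt]
  · simp [IsHermitian, add_comm]

variable [Fintype κ]

theorem dotProduct_supplyMatrix_mulVec (C : Matrix κ ι ℝ) {E : Matrix ι ι ℝ} (S : Matrix κ κ ℝ)
    (hE : E.IsHermitian) (y : ι → ℝ) (v : κ → ℝ) :
    Sum.elim y v ⬝ᵥ (supplyMatrix C E S *ᵥ Sum.elim y v) =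
      y ⬝ᵥ (E *ᵥ y) + v ⬝ᵥ (C *ᵥ (E *ᵥ y) + S *ᵥ v) := by
  have hEt : Eᵀ = E := by simpa using hE.eq
  have hcross : y ⬝ᵥ (E *ᵥ (Cᵀ *ᵥ v)) = v ⬝ᵥ (C *ᵥ (E *ᵥ y)) := by
    rw [mulVec_mulVec, ← hEt, ← transpose_mul, dotProduct_transpose_mulVec, hEt, mulVec_mulVec]
  have hsymm : v ⬝ᵥ (Sᵀ *ᵥ v) = v ⬝ᵥ (S *ᵥ v) := dotProduct_transpose_mulVec S v v
  simp only [supplyMatrix, fromBlocks_mulVec, Sum.elim_comp_inl, Sum.elim_comp_inr,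
    sumElim_dotProduct_sumElim, smul_mulVec, add_mulVec, dotProduct_add, dotProduct_smul,
    smul_eq_mul, hcross, hsymm, ← mulVec_mulVec]
  ring

variable [DecidableEq ι]

theorem posSemidef_passivityLMI_iff_forall_le (N : Matrix ι ι ℝ) (F : Matrix ι κ ℝ)
    (C : Matrix κ ι ℝ) {E H : Matrix ι ι ℝ} (S : Matrix κ κ ℝ) (hE : E.PosDef) (hH : H.PosDef) :
    (passivityLMI N F C E S H).PosSemidef ↔
      ∀ (y : ι → ℝ) (v : κ → ℝ),
        (N *ᵥ y + F *ᵥ v) ⬝ᵥ (E⁻¹ *ᵥ (N *ᵥ y + F *ᵥ v)) + (E *ᵥ y) ⬝ᵥ (H⁻¹ *ᵥ (E *ᵥ y)) ≤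
          y ⬝ᵥ (E *ᵥ y) + v ⬝ᵥ (C *ᵥ (E *ᵥ y) + S *ᵥ v) := by
  have hoff : fromBlocks Nᵀ E Fᵀ 0 = (fromBlocks N F E 0)ᴴ := by
    rw [fromBlocks_conjTranspose, hE.isHermitian.eq, conjTranspose_zero,
      conjTranspose_eq_transpose_of_trivial, conjTranspose_eq_transpose_of_trivial]
  have hdiag : (fromBlocks E 0 0 H).PosDef := posDef_fromBlocks_zero_zero hE hH
  have hinv : (fromBlocks E 0 0 H)⁻¹ = fromBlocks E⁻¹ 0 0 H⁻¹ := by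
    simp [inv_fromBlocks_zero₁₂_of_isUnit_iff E 0 H (iff_of_true hE.isUnit hH.isUnit)]
  rw [passivityLMI, hoff, posSemidef_fromBlocks_iff_forall_le
    (isHermitian_supplyMatrix C S hE.isHermitian) hdiag hdiag.isUnit, hinv,
    ← (Equiv.sumArrowEquivProdArrow ι κ ℝ).symm.forall_congr_right, Prod.forall]
  refine forall₂_congr fun y v ↦ ?_
  have hsplit : (Equiv.sumArrowEquivProdArrow ι κ ℝ).symm (y, v) = Sum.elim y v := rfl
  simp only [hsplit, star_trivial, dotProduct_supplyMatrix_mulVec C S hE.isHermitian,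
    fromBlocks_mulVec, Sum.elim_comp_inl, Sum.elim_comp_inr, zero_mulVec, add_zero, zero_add,
    sumElim_dotProduct_sumElim]

theorem posSemidef_passivityLMI_iff_isDissipative (N : Matrix ι ι ℝ) (F : Matrix ι κ ℝ)
    (C : Matrix κ ι ℝ) {E H : Matrix ι ι ℝ} (S : Matrix κ κ ℝ) (hE : E.PosDef) (hH : H.PosDef) :
    (passivityLMI N F C E S H).PosSemidef ↔ IsDissipative (N * E⁻¹) F C S E⁻¹ H⁻¹ := by
  have hdet : IsUnit E.det := (isUnit_iff_isUnit_det E).mp hE.isUnit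
  have hsurj : Function.Surjective E.mulVec := mulVec_surjective_iff_isUnit.mpr hE.isUnit
  rw [IsDissipative, hsurj.forall, posSemidef_passivityLMI_iff_forall_le N F C S hE hH]
  refine forall₂_congr fun y v ↦ ?_
  have hcancel : E⁻¹ *ᵥ (E *ᵥ y) = y := by
    rw [mulVec_mulVec, nonsing_inv_mul E hdet, one_mulVec]
  rw [← mulVec_mulVec, hcancel, dotProduct_comm (E *ᵥ y) y, sub_le_sub_iff, add_comm (v ⬝ᵥ _)]

theorem stmt0_general [Fintype ρ] (A : Matrix ι ι ℝ) (B : Matrix ι ρ ℝ) (F : Matrix ι κ ℝ)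
    (C : Matrix κ ι ℝ) {E H : Matrix ι ι ℝ} (S : Matrix κ κ ℝ) (G : Matrix ρ ι ℝ)
    (hE : E.PosDef) (hH : H.PosDef) :
    (passivityLMI (A * E + B * G) F C E S H).PosSemidef ↔
      IsDissipative (A + B * (G * E⁻¹)) F C S E⁻¹ H⁻¹ := by
  have hdet : IsUnit E.det := (isUnit_iff_isUnit_det E).mp hE.isUnit
  have hclosedLoop : (A * E + B * G) * E⁻¹ = A + B * (G * E⁻¹) := by
    rw [Matrix.add_mul, mul_nonsing_inv_cancel_right E A hdet, Matrix.mul_assoc]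
  rw [posSemidef_passivityLMI_iff_isDissipative _ F C S hE hH, hclosedLoop]

end Passivity

/-- Paper's Lemma 1: feasibility of the LMI M(E,S,G,H) ⪰ 0 (with E ≻ 0, H ≻ 0)
implies the strict passivity (quadratic dissipation) inequality with
P = E⁻¹, K = G E⁻¹, Γ = H⁻¹ and D = S. -/
theorem stmt0 (n m : ℕ)
    (A : Matrix (Fin n) (Fin n) ℝ) (B F : Matrix (Fin n) (Fin m) ℝ)
    (C : Matrix (Fin m) (Fin n) ℝ)
    (E H : Matrix (Fin n) (Fin n) ℝ) (S : Matrix (Fin m) (Fin m) ℝ)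
    (G : Matrix (Fin m) (Fin n) ℝ)
    (hE : E.PosDef) (hH : H.PosDef)
    (hM : (Mblock A B F C E S G H).PosSemidef) :
    ∀ (x : Fin n → ℝ) (v : Fin m → ℝ),
      ((A + B * (G * E⁻¹)) *ᵥ x + F *ᵥ v) ⬝ᵥ
          (E⁻¹ *ᵥ ((A + B * (G * E⁻¹)) *ᵥ x + F *ᵥ v)) -
        x ⬝ᵥ (E⁻¹ *ᵥ x) ≤
      v ⬝ᵥ (C *ᵥ x + S *ᵥ v) - x ⬝ᵥ (H⁻¹ *ᵥ x) :=
  (stmt0_general A B F C S G hE hH).mp hM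
end

section
/- Let P, Γ ∈ ℝ^{n×n} with P ≻ 0 and Γ symmetric, and K ∈ ℝ^{m×n}. If the symmetric block matrix obtained by setting D = 0, namely [[P − (A+BK)ᵀP(A+BK) − Γ, ½Cᵀ − (A+BK)ᵀPF], [½C − FᵀP(A+BK), −FᵀPF]], is positive semidefinite, then F = 0 and C = 0. (The paper's claim that passivity with respect to the actual output y = Cx is impossible unless the subsystems are decoupled, which motivates the virtual output.) -/
open Matrix

/-!
The lower-right block `-FᵀPF` of the positive semidefinite block matrix is positive semidefinite,
and so is `FᵀPF`; hence `FᵀPF = 0`, and writing `P = RᵀR` turns this into `RF = 0` and so `PF = 0`,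
whence `F = 0` for invertible `P`. The off-diagonal blocks are then `½Cᵀ` and `½C`, and they vanish
because a zero on the diagonal of a positive semidefinite matrix forces its whole column to be zero.
-/

theorem eq_zero_of_isUnit_of_mul_eq_zero {R m n : Type*} [Semiring R] [Fintype n] [DecidableEq n]
    {U : Matrix n n R} (hU : IsUnit U) {X : Matrix n m R} (h : U * X = 0) : X = 0 := by
  obtain ⟨V, hVU⟩ := hU.exists_left_inv
  calc X = V * (U * X) := by rw [← Matrix.mul_assoc, hVU, Matrix.one_mul]
    _ = 0 := by rw [h, Matrix.mul_zero]

section RCLike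

open scoped ComplexOrder MatrixOrder

variable {𝕜 l m n : Type*} [RCLike 𝕜]

theorem apply_eq_zero_of_posSemidef_of_diag_eq_zero {A : Matrix n n 𝕜} (hA : A.PosSemidef)
    {j : n} (hj : A j j = 0) (i : n) : A i j = 0 := by
  have hA₂ : (A.submatrix ![i, j] ![i, j]).PosSemidef := hA.submatrix ![i, j]
  have hcol : A.submatrix ![i, j] ![i, j] *ᵥ Pi.single 1 1 = 0 := by
    rw [← hA₂.dotProduct_mulVec_zero_iff, mulVec_single_one, Pi.star_single, star_one,
      single_one_dotProduct]
    exact hj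
  rw [mulVec_single_one] at hcol
  exact congrFun hcol 0

theorem toBlocks₁₂_eq_zero_of_posSemidef_fromBlocks_zero {A : Matrix l l 𝕜} {B : Matrix l m 𝕜}
    {C : Matrix m l 𝕜} (h : (fromBlocks A B C 0).PosSemidef) : B = 0 := by
  ext i j
  exact apply_eq_zero_of_posSemidef_of_diag_eq_zero h (j := Sum.inr j) rfl (Sum.inl i)

theorem toBlocks₂₂_posSemidef_of_fromBlocks {A : Matrix l l 𝕜} {B : Matrix l m 𝕜}
    {C : Matrix m l 𝕜} {D : Matrix m m 𝕜} (h : (fromBlocks A B C D).PosSemidef) : D.PosSemidef :=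
  h.submatrix Sum.inr

variable [Fintype n]

theorem conjTranspose_mul_mul_same_eq_zero_iff_of_posSemidef {P : Matrix n n 𝕜}
    (hP : P.PosSemidef) {X : Matrix n m 𝕜} : Xᴴ * P * X = 0 ↔ P * X = 0 := by
  classical
  obtain ⟨R, rfl⟩ := CStarAlgebra.nonneg_iff_eq_star_mul_self.mp hP.nonneg
  have hgram : Xᴴ * (Rᴴ * R) * X = (R * X)ᴴ * (R * X) := by
    simp only [conjTranspose_mul, Matrix.mul_assoc]
  rw [star_eq_conjTranspose, hgram, conjTranspose_mul_self_eq_zero,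
    conjTranspose_mul_self_mul_eq_zero]

theorem mul_eq_zero_of_posSemidef_neg_conjTranspose_mul_mul_same [Finite m]
    {P : Matrix n n 𝕜} (hP : P.PosSemidef) {X : Matrix n m 𝕜} (hX : (-(Xᴴ * P * X)).PosSemidef) :
    P * X = 0 := by
  have hle : Xᴴ * P * X ≤ 0 := neg_nonneg.mp hX.nonneg
  have hge : 0 ≤ Xᴴ * P * X := (hP.conjTranspose_mul_mul_same X).nonneg
  exact (conjTranspose_mul_mul_same_eq_zero_iff_of_posSemidef hP).mp (le_antisymm hle hge)

theorem stmt3_general [Finite m] {S : Matrix l l 𝕜} {M : Matrix n l 𝕜} {F : Matrix n m 𝕜}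
    {C : Matrix m l 𝕜} {P : Matrix n n 𝕜} (hP : P.PosSemidef)
    (hPSD : (fromBlocks S ((1 / 2 : 𝕜) • Cᴴ - Mᴴ * P * F) ((1 / 2 : 𝕜) • C - Fᴴ * P * M)
      (-(Fᴴ * P * F))).PosSemidef) :
    P * F = 0 ∧ C = 0 := by
  have hPF : P * F = 0 := mul_eq_zero_of_posSemidef_neg_conjTranspose_mul_mul_same hP
    (toBlocks₂₂_posSemidef_of_fromBlocks hPSD)
  simp only [Matrix.mul_assoc, hPF, Matrix.mul_zero, neg_zero, sub_zero] at hPSD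
  have hC : (1 / 2 : 𝕜) • Cᴴ = 0 := toBlocks₁₂_eq_zero_of_posSemidef_fromBlocks_zero hPSD
  exact ⟨hPF, by simpa using hC⟩

end RCLike

/-- If the passivity block matrix with D = 0, namely
[[P − (A+BK)ᵀP(A+BK) − Γ, ½Cᵀ − (A+BK)ᵀPF], [½C − FᵀP(A+BK), −FᵀPF]],
is positive semidefinite (with P ≻ 0, Γ symmetric), then F = 0 and C = 0:
passivity with respect to the actual output is impossible unless the
subsystems are decoupled. -/
theorem stmt3 (n m : ℕ)
    (A : Matrix (Fin n) (Fin n) ℝ) (B F : Matrix (Fin n) (Fin m) ℝ)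
    (C : Matrix (Fin m) (Fin n) ℝ)
    (P Γ : Matrix (Fin n) (Fin n) ℝ) (K : Matrix (Fin m) (Fin n) ℝ)
    (hP : P.PosDef) (hΓ : Γ.IsSymm)
    (hPSD : (Matrix.fromBlocks
      (P - (A + B * K)ᵀ * P * (A + B * K) - Γ)
      ((1 / 2 : ℝ) • Cᵀ - (A + B * K)ᵀ * P * F)
      ((1 / 2 : ℝ) • C - Fᵀ * P * (A + B * K))
      (-(Fᵀ * P * F))).PosSemidef) :
    F = 0 ∧ C = 0 := by
  obtain ⟨hPF, hC⟩ := stmt3_general hP.posSemidef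
    (by simpa only [conjTranspose_eq_transpose_of_trivial] using hPSD)
  exact ⟨eq_zero_of_isUnit_of_mul_eq_zero hP.isUnit hPF, hC⟩
end

section
/- Suppose for each i ∈ {1,…,M} there exist P_i ≻ 0 and symmetric Γ_i ∈ ℝ^{n_i×n_i} such that for all x_i ∈ ℝ^{n_i}, v_i ∈ ℝ^q: ((A_i+B_iK_i)x_i+F_iv_i)ᵀP_i((A_i+B_iK_i)x_i+F_iv_i) − x_iᵀP_ix_i ≤ v_iᵀ(C_ix_i+D_iv_i) − x_iᵀΓ_ix_i. Let Γ = blockdiag(Γ_1,…,Γ_M) and suppose ½(D+Dᵀ) ≻ 0, ε₀ > 0, and the symmetric block matrix [[Γ − ε₀I_n + CᵀL̃C, CᵀL̃ᵀ], [L̃C, (½(D+Dᵀ))⁻¹]] is positive semidefinite. Then the global closed-loop system x⁺ = (Ā − F̄L̃C)x is asymptotically stable: for every x₀ ∈ ℝⁿ, (Ā − F̄L̃C)ᵏx₀ → 0 as k → ∞. (Paper's Lemma 2.) -/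
open Matrix Filter

/-- L̃ = L ⊗ I_q, viewed as a block matrix indexed by the sigma type Σ _ : Fin M, Fin q:
its (i,j) block is l_ij I_q. -/
def Ltilde {M q : ℕ} (L : Matrix (Fin M) (Fin M) ℝ) :
    Matrix (Σ _ : Fin M, Fin q) (Σ _ : Fin M, Fin q) ℝ :=
  fun a b => L a.1 b.1 * (if a.2 = b.2 then 1 else 0)

/-!
The block-diagonal sum of the subsystems inherits their passivity inequality, with storage function
`V x = xᵀ P x`. Substituting the feedback `v = -N C x` turns the inequality into
`V (x⁺) - V x ≤ wᵀ D w - wᵀ C x - xᵀ Γ x` with `w = N C x`, and the Schur complement of the linear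
matrix inequality, evaluated at `x`, says that the right-hand side is at most `-ε xᵀ x`. Hence
`ε ∑ₖ ‖x k‖²` telescopes to at most `V (x 0)`, and a summable sequence tends to zero.
-/

section Convergence

lemma tendsto_zero_of_le_sub_succ {a b : ℕ → ℝ} (ha : ∀ k, 0 ≤ a k) (hb : ∀ k, 0 ≤ b k)
    (hab : ∀ k, b k ≤ a k - a (k + 1)) : Tendsto b atTop (nhds 0) := by
  refine (summable_of_sum_range_le (c := a 0) hb fun K => ?_).tendsto_atTop_zero
  calc ∑ k ∈ Finset.range K, b k
      ≤ ∑ k ∈ Finset.range K, (a k - a (k + 1)) := Finset.sum_le_sum fun k _ => hab k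
    _ = a 0 - a K := Finset.sum_range_sub' a K
    _ ≤ a 0 := sub_le_self _ (ha K)

lemma tendsto_zero_of_dotProduct_self {α n : Type*} [Fintype n] {l : Filter α} {x : α → n → ℝ}
    (hx : Tendsto (fun k => x k ⬝ᵥ x k) l (nhds 0)) : Tendsto x l (nhds 0) := by
  refine tendsto_pi_nhds.2 fun j => squeeze_zero_norm (fun k => ?_) (by simpa using hx.sqrt)
  refine Real.abs_le_sqrt ?_
  rw [pow_two]
  exact Finset.single_le_sum (f := fun j => x k j * x k j) (fun _ _ => mul_self_nonneg _)
    (Finset.mem_univ j)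

lemma tendsto_pow_mulVec_zero_of_lyapunov {n : Type*} [Fintype n] [DecidableEq n]
    {T : Matrix n n ℝ} {V : (n → ℝ) → ℝ} (hV : ∀ x, 0 ≤ V x) {ε : ℝ} (hε : 0 < ε)
    (hVT : ∀ x, V (T *ᵥ x) - V x ≤ -(ε * (x ⬝ᵥ x))) (x₀ : n → ℝ) :
    Tendsto (fun k : ℕ => T ^ k *ᵥ x₀) atTop (nhds 0) := by
  have hdecay : Tendsto (fun k : ℕ => ε * ((T ^ k *ᵥ x₀) ⬝ᵥ (T ^ k *ᵥ x₀))) atTop (nhds 0) := by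
    refine tendsto_zero_of_le_sub_succ (a := fun k => V (T ^ k *ᵥ x₀)) (fun k => hV _)
      (fun k => mul_nonneg hε.le (Fintype.sum_nonneg fun _ => mul_self_nonneg _)) fun k => ?_
    have hstep := hVT (T ^ k *ᵥ x₀)
    rw [mulVec_mulVec, ← pow_succ'] at hstep
    linarith
  refine tendsto_zero_of_dotProduct_self ?_
  simpa [hε.ne'] using hdecay.const_mul ε⁻¹

end Convergence

section BlockDiagonal

variable {ι R : Type*} {m n : ι → Type*} [Fintype ι] [∀ i, Fintype (n i)]

lemma dotProduct_sigma [NonUnitalNonAssocSemiring R] (x y : (Σ i, n i) → R) :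
    x ⬝ᵥ y = ∑ i, (fun a => x ⟨i, a⟩) ⬝ᵥ (fun a => y ⟨i, a⟩) :=
  Fintype.sum_sigma _

variable [DecidableEq ι]

lemma blockDiagonal'_mulVec_apply [NonUnitalNonAssocSemiring R] (A : ∀ i, Matrix (m i) (n i) R)
    (x : (Σ i, n i) → R) (i : ι) (a : m i) :
    (blockDiagonal' A *ᵥ x) ⟨i, a⟩ = (A i *ᵥ fun b => x ⟨i, b⟩) a := by
  simp only [mulVec, dotProduct_sigma]
  rw [Fintype.sum_eq_single i]
  · simp only [blockDiagonal'_apply_eq]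
  · intro j hj
    simp [dotProduct, blockDiagonal'_apply_ne A _ _ hj.symm]

lemma dotProduct_blockDiagonal'_mulVec [NonUnitalNonAssocSemiring R] [∀ i, Fintype (m i)]
    (A : ∀ i, Matrix (m i) (n i) R) (x : (Σ i, m i) → R) (y : (Σ i, n i) → R) :
    x ⬝ᵥ blockDiagonal' A *ᵥ y = ∑ i, (fun a => x ⟨i, a⟩) ⬝ᵥ A i *ᵥ fun b => y ⟨i, b⟩ := by
  simp only [dotProduct_sigma, blockDiagonal'_mulVec_apply]

end BlockDiagonal

lemma posSemidef_blockDiagonal' {ι R : Type*} {n : ι → Type*} [Finite ι] [DecidableEq ι]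
    [∀ i, Finite (n i)] [Ring R] [PartialOrder R] [StarRing R] [AddLeftMono R]
    {P : ∀ i, Matrix (n i) (n i) R} (hP : ∀ i, (P i).PosSemidef) :
    (blockDiagonal' P).PosSemidef := by
  have := Fintype.ofFinite ι
  have := fun i => Fintype.ofFinite (n i)
  refine .of_dotProduct_mulVec_nonneg ?_ fun x => ?_
  · simp only [IsHermitian, blockDiagonal'_conjTranspose, (hP _).isHermitian.eq]
  · rw [dotProduct_blockDiagonal'_mulVec]
    exact Finset.sum_nonneg fun i _ => (hP i).dotProduct_mulVec_nonneg _

section QuadraticForm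

variable {m n : Type*} [Fintype m] [Fintype n]

lemma dotProduct_half_add_transpose_mulVec {R : Type*} [Field R] [NeZero (2 : R)]
    (D : Matrix m m R) (v : m → R) :
    v ⬝ᵥ ((1 / 2 : R) • (D + Dᵀ)) *ᵥ v = v ⬝ᵥ D *ᵥ v := by
  rw [smul_mulVec, add_mulVec, dotProduct_smul, dotProduct_add, dotProduct_transpose_mulVec,
    smul_eq_mul, ← two_mul, one_div, inv_mul_cancel_left₀ two_ne_zero]

lemma dotProduct_mulVec_le_of_posSemidef_fromBlocks_inv {R : Type*} [Field R] [PartialOrder R]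
    [StarRing R] [StarOrderedRing R] [DecidableEq m] {Q : Matrix n n R} {W : Matrix m n R}
    {S : Matrix m m R} (hS : S.PosDef) (hQ : (fromBlocks Q Wᴴ W S⁻¹).PosSemidef) (x : n → R) :
    star (W *ᵥ x) ⬝ᵥ S *ᵥ (W *ᵥ x) ≤ star x ⬝ᵥ Q *ᵥ x := by
  have : Invertible S := hS.isUnit.invertible
  have : Invertible S⁻¹ := hS.inv.isUnit.invertible
  have hSchur : (Q - Wᴴ * S * W).PosSemidef := by
    simpa using (PosDef.fromBlocks₂₂ Q Wᴴ hS.inv).1 (by simpa using hQ)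
  have hx := hSchur.dotProduct_mulVec_nonneg x
  rw [sub_mulVec, dotProduct_sub, Matrix.mul_assoc, ← mulVec_mulVec, dotProduct_mulVec _ Wᴴ,
    ← star_mulVec, ← mulVec_mulVec] at hx
  exact sub_nonneg.1 hx

end QuadraticForm

/-- The passivity inequality of the linear system `x⁺ = A x + F v` with input `v` and output
`z = C x + D v`: the storage function `xᵀ P x` grows in one step by at most the supplied `vᵀ z`
minus the dissipated `xᵀ Γ x`. No definiteness of `P` or `Γ` is included. -/
def PassivityInequality {m n : Type*} [Fintype m] [Fintype n] (A : Matrix n n ℝ)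
    (F : Matrix n m ℝ) (C : Matrix m n ℝ) (D : Matrix m m ℝ) (P Γ : Matrix n n ℝ) : Prop :=
  ∀ (x : n → ℝ) (v : m → ℝ),
    (A *ᵥ x + F *ᵥ v) ⬝ᵥ P *ᵥ (A *ᵥ x + F *ᵥ v) - x ⬝ᵥ P *ᵥ x ≤
      v ⬝ᵥ (C *ᵥ x + D *ᵥ v) - x ⬝ᵥ Γ *ᵥ x

/-- The block matrix whose positive semidefiniteness is the linear matrix inequality certifying
stability of the feedback `v = -N C x`, where `N` plays the role of `L̃` and `ε` of `ε₀`. The entry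
`(½ (D + Dᵀ))⁻¹` has the junk value `0` when the symmetric part of `D` is singular. -/
noncomputable def feedbackLMIMatrix {m n : Type*} [Fintype m] [DecidableEq m] [DecidableEq n]
    (Γ : Matrix n n ℝ) (C : Matrix m n ℝ) (D N : Matrix m m ℝ) (ε : ℝ) :
    Matrix (n ⊕ m) (n ⊕ m) ℝ :=
  fromBlocks (Γ - ε • (1 : Matrix n n ℝ) + Cᵀ * N * C) (Cᵀ * Nᵀ) (N * C)
    ((1 / 2 : ℝ) • (D + Dᵀ))⁻¹

namespace PassivityInequality

theorem blockDiagonal' {ι : Type*} {m n : ι → Type*} [Fintype ι] [DecidableEq ι]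
    [∀ i, Fintype (m i)] [∀ i, Fintype (n i)]
    {A P Γ : ∀ i, Matrix (n i) (n i) ℝ} {F : ∀ i, Matrix (n i) (m i) ℝ}
    {C : ∀ i, Matrix (m i) (n i) ℝ} {D : ∀ i, Matrix (m i) (m i) ℝ}
    (h : ∀ i, PassivityInequality (A i) (F i) (C i) (D i) (P i) (Γ i)) :
    PassivityInequality (Matrix.blockDiagonal' A) (Matrix.blockDiagonal' F)
      (Matrix.blockDiagonal' C) (Matrix.blockDiagonal' D) (Matrix.blockDiagonal' P)
      (Matrix.blockDiagonal' Γ) := by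
  intro x v
  simp only [dotProduct_blockDiagonal'_mulVec, dotProduct_sigma v, Pi.add_apply,
    blockDiagonal'_mulVec_apply, ← Finset.sum_sub_distrib]
  exact Finset.sum_le_sum fun i _ => h i _ _

variable {m n : Type*} [Fintype m] [Fintype n] [DecidableEq m] [DecidableEq n]
  {A P Γ : Matrix n n ℝ} {F : Matrix n m ℝ} {C : Matrix m n ℝ} {D N : Matrix m m ℝ} {ε : ℝ}

theorem closedLoop_storage_decrease (h : PassivityInequality A F C D P Γ)
    (hD : ((1 / 2 : ℝ) • (D + Dᵀ)).PosDef)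
    (hLMI : (feedbackLMIMatrix Γ C D N ε).PosSemidef) (x : n → ℝ) :
    ((A - F * N * C) *ᵥ x) ⬝ᵥ P *ᵥ ((A - F * N * C) *ᵥ x) - x ⬝ᵥ P *ᵥ x ≤ -(ε * (x ⬝ᵥ x)) := by
  set w := (N * C) *ᵥ x with hw
  have hstep : (A - F * N * C) *ᵥ x = A *ᵥ x + F *ᵥ (-w) := by
    rw [hw, sub_mulVec, mulVec_neg, mulVec_mulVec, Matrix.mul_assoc, sub_eq_add_neg]
  have hsupply : -w ⬝ᵥ (C *ᵥ x + D *ᵥ (-w)) = w ⬝ᵥ D *ᵥ w - w ⬝ᵥ C *ᵥ x := by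
    rw [dotProduct_add, mulVec_neg, neg_dotProduct_neg, neg_dotProduct]
    ring
  have hfeedback : x ⬝ᵥ (Cᵀ * N * C) *ᵥ x = w ⬝ᵥ C *ᵥ x := by
    rw [Matrix.mul_assoc, ← mulVec_mulVec, dotProduct_transpose_mulVec]
  have hSchur : w ⬝ᵥ D *ᵥ w ≤ x ⬝ᵥ Γ *ᵥ x - ε * (x ⬝ᵥ x) + w ⬝ᵥ C *ᵥ x := by
    rw [feedbackLMIMatrix, ← transpose_mul, ← conjTranspose_eq_transpose_of_trivial (N * C)] at hLMI
    have := dotProduct_mulVec_le_of_posSemidef_fromBlocks_inv hD hLMI x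
    rwa [star_trivial x, star_trivial ((N * C) *ᵥ x), dotProduct_half_add_transpose_mulVec,
      add_mulVec, sub_mulVec, smul_mulVec, one_mulVec, dotProduct_add, dotProduct_sub,
      dotProduct_smul, smul_eq_mul, hfeedback] at this
  have hpassive := h x (-w)
  rw [hsupply, ← hstep] at hpassive
  linarith

theorem tendsto_closedLoop (h : PassivityInequality A F C D P Γ) (hP : P.PosSemidef) (hε : 0 < ε)
    (hD : ((1 / 2 : ℝ) • (D + Dᵀ)).PosDef)
    (hLMI : (feedbackLMIMatrix Γ C D N ε).PosSemidef) (x₀ : n → ℝ) :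
    Tendsto (fun k : ℕ => (A - F * N * C) ^ k *ᵥ x₀) atTop (nhds 0) :=
  tendsto_pow_mulVec_zero_of_lyapunov (V := fun x => x ⬝ᵥ P *ᵥ x) hP.dotProduct_mulVec_nonneg hε
    (h.closedLoop_storage_decrease hD hLMI) x₀

end PassivityInequality

theorem stmt7_general {ι : Type*} {m n : ι → Type*} [Fintype ι] [DecidableEq ι]
    [∀ i, Fintype (m i)] [∀ i, DecidableEq (m i)] [∀ i, Fintype (n i)] [∀ i, DecidableEq (n i)]
    {A P Γ : ∀ i, Matrix (n i) (n i) ℝ} {F : ∀ i, Matrix (n i) (m i) ℝ}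
    {C : ∀ i, Matrix (m i) (n i) ℝ} {D : ∀ i, Matrix (m i) (m i) ℝ}
    (hP : ∀ i, (P i).PosSemidef)
    (hdiss : ∀ i, PassivityInequality (A i) (F i) (C i) (D i) (P i) (Γ i))
    {N : Matrix (Σ i, m i) (Σ i, m i) ℝ} {ε : ℝ} (hε : 0 < ε)
    (hD : ((1 / 2 : ℝ) • (blockDiagonal' D + (blockDiagonal' D)ᵀ)).PosDef)
    (hLMI : (feedbackLMIMatrix (blockDiagonal' Γ) (blockDiagonal' C) (blockDiagonal' D) N
      ε).PosSemidef)
    (x₀ : (Σ i, n i) → ℝ) :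
    Tendsto (fun k : ℕ =>
      (blockDiagonal' A - blockDiagonal' F * N * blockDiagonal' C) ^ k *ᵥ x₀) atTop (nhds 0) :=
  (PassivityInequality.blockDiagonal' hdiss).tendsto_closedLoop (posSemidef_blockDiagonal' hP)
    hε hD hLMI x₀

/-- Paper's Lemma 2: if every subsystem is strictly passive w.r.t. (v_i, z_i) and the
LMI [[Γ − ε₀I + CᵀL̃C, CᵀL̃ᵀ], [L̃C, (½(D+Dᵀ))⁻¹]] ⪰ 0 holds with ½(D+Dᵀ) ≻ 0 and ε₀ > 0,
then the global closed loop x⁺ = (Ā − F̄L̃C)x is asymptotically stable. -/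
theorem stmt7 (M q : ℕ) (n : Fin M → ℕ)
    (A : ∀ i, Matrix (Fin (n i)) (Fin (n i)) ℝ)
    (B F : ∀ i, Matrix (Fin (n i)) (Fin q) ℝ)
    (C : ∀ i, Matrix (Fin q) (Fin (n i)) ℝ)
    (K : ∀ i, Matrix (Fin q) (Fin (n i)) ℝ)
    (D : Fin M → Matrix (Fin q) (Fin q) ℝ)
    (P Γ : ∀ i, Matrix (Fin (n i)) (Fin (n i)) ℝ)
    (hP : ∀ i, (P i).PosDef) (hΓsym : ∀ i, (Γ i).IsSymm)
    (hdiss : ∀ i (x : Fin (n i) → ℝ) (v : Fin q → ℝ),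
      ((A i + B i * K i) *ᵥ x + F i *ᵥ v) ⬝ᵥ
          (P i *ᵥ ((A i + B i * K i) *ᵥ x + F i *ᵥ v)) -
        x ⬝ᵥ (P i *ᵥ x) ≤
      v ⬝ᵥ (C i *ᵥ x + D i *ᵥ v) - x ⬝ᵥ (Γ i *ᵥ x))
    (L : Matrix (Fin M) (Fin M) ℝ) (ε₀ : ℝ) (hε₀ : 0 < ε₀)
    (hDpos : ((1 / 2 : ℝ) •
      (Matrix.blockDiagonal' D + (Matrix.blockDiagonal' D)ᵀ)).PosDef)
    (hLMI : (Matrix.fromBlocks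
      (Matrix.blockDiagonal' Γ -
        ε₀ • (1 : Matrix (Σ i, Fin (n i)) (Σ i, Fin (n i)) ℝ) +
        (Matrix.blockDiagonal' C)ᵀ * Ltilde (q := q) L * Matrix.blockDiagonal' C)
      ((Matrix.blockDiagonal' C)ᵀ * (Ltilde (q := q) L)ᵀ)
      (Ltilde (q := q) L * Matrix.blockDiagonal' C)
      (((1 / 2 : ℝ) •
        (Matrix.blockDiagonal' D + (Matrix.blockDiagonal' D)ᵀ))⁻¹)).PosSemidef) :
    ∀ x₀ : (Σ i, Fin (n i)) → ℝ,
      Tendsto (fun k : ℕ =>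
        ((Matrix.blockDiagonal' (fun i => A i + B i * K i) -
          Matrix.blockDiagonal' F * Ltilde (q := q) L * Matrix.blockDiagonal' C) ^ k) *ᵥ x₀)
        atTop (nhds 0) := by
  exact stmt7_general (fun i => (hP i).posSemidef) hdiss hε₀ hDpos hLMI
end
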